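/- Let M be a positive bounded operator and P a positive trace-class operator on a complex Hilbert space H, and let z be a positive Hilbert–Schmidt operator. Then, as h → 0 among self-adjoint Hilbert–Schmidt operators with ‖h‖_HS < 1/2, one has Tr[M (z+h)²(1+z+h)^{-1}] + Tr[P(1+z+h)^{-1}] − Tr[M z²(1+z)^{-1}] − Tr[P(1+z)^{-1}] = Tr[(M − (1+z)^{-1} M (1+z)^{-1} − (1+z)^{-1} P (1+z)^{-1}) h] + o(‖h‖_HS). In other words, the functional F(z) = Tr[M z²(1+z)^{-1}] + Tr[P(1+z)^{-1}] is Fréchet differentiable at every positive Hilbert–Schmidt z with gradient M − (1+z)^{-1} M (1+z)^{-1} − (1+z)^{-1} P (1+z)^{-1}. -/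

import Mathlib

set_option synthInstance.maxHeartbeats 1000000
set_option maxHeartbeats 1000000

open scoped InnerProductSpace

section TraceSetup

variable (H : Type*) [NormedAddCommGroup H] [InnerProductSpace ℂ H] [CompleteSpace H]

/-- A fixed Hilbert basis of `H`, used to define the trace. -/
noncomputable def traceBasis : HilbertBasis (exists_hilbertBasis ℂ H).choose ℂ H :=
  (exists_hilbertBasis ℂ H).choose_spec.choose

variable {H}

/-- The diagonal of an operator with respect to the chosen Hilbert basis. -/
noncomputable def opDiag (A : H →L[ℂ] H) (i : (exists_hilbertBasis ℂ H).choose) : ℝ :=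
  (⟪traceBasis H i, A (traceBasis H i)⟫_ℂ).re

/-- The trace of an operator: the sum of its diagonal with respect to the chosen Hilbert
basis.  For a trace-class operator this agrees with the usual trace. -/
noncomputable def opTrace (A : H →L[ℂ] H) : ℝ := ∑' i, opDiag A i

/-- An operator is a positive trace-class operator iff it is positive (for the Loewner order,
i.e. self-adjoint with nonnegative quadratic form) and its diagonal is summable. -/
def IsPosTraceClass (A : H →L[ℂ] H) : Prop := 0 ≤ A ∧ Summable (opDiag A)

/-- `A` is Hilbert–Schmidt iff `A* A` has finite trace. -/
def IsHilbertSchmidt (A : H →L[ℂ] H) : Prop := Summable (opDiag (star A * A))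

/-- The Hilbert–Schmidt norm `‖A‖_HS = (Tr[A* A])^{1/2}`. -/
noncomputable def hsNorm (A : H →L[ℂ] H) : ℝ := Real.sqrt (opTrace (star A * A))

end TraceSetup

section Helpers

variable {H : Type*} [NormedAddCommGroup H] [InnerProductSpace ℂ H] [CompleteSpace H]


lemma opDiag_add (A B : H →L[ℂ] H) : opDiag (A + B) = opDiag A + opDiag B := by
  ext i; simp [opDiag, inner_add_right]

lemma opDiag_sub (A B : H →L[ℂ] H) : opDiag (A - B) = opDiag A - opDiag B := by
  ext i; simp [opDiag, inner_sub_right]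

lemma opDiag_star_mul (A B : H →L[ℂ] H) (i) :
    opDiag (star A * B) i = (⟪A (traceBasis H i), B (traceBasis H i)⟫_ℂ).re := by
  simp [opDiag, ContinuousLinearMap.star_eq_adjoint, ContinuousLinearMap.adjoint_inner_right]

lemma opDiag_sq (A : H →L[ℂ] H) (i) :
    opDiag (star A * A) i = ‖A (traceBasis H i)‖ ^ 2 := by
  rw [opDiag_star_mul]
  have := inner_self_eq_norm_sq (𝕜 := ℂ) (A (traceBasis H i))
  simpa using this

lemma hs_iff (A : H →L[ℂ] H) :
    IsHilbertSchmidt A ↔ Summable fun i => ‖A (traceBasis H i)‖ ^ 2 := by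
  unfold IsHilbertSchmidt
  rw [show opDiag (star A * A) = fun i => ‖A (traceBasis H i)‖ ^ 2 from funext (opDiag_sq A)]

lemma opTrace_sq (A : H →L[ℂ] H) :
    opTrace (star A * A) = ∑' i, ‖A (traceBasis H i)‖ ^ 2 := by
  unfold opTrace; exact tsum_congr (opDiag_sq A)

lemma opTrace_sq_nonneg (A : H →L[ℂ] H) : 0 ≤ opTrace (star A * A) := by
  rw [opTrace_sq]; exact tsum_nonneg fun i => by positivity

lemma hsNorm_sq (A : H →L[ℂ] H) : hsNorm A ^ 2 = ∑' i, ‖A (traceBasis H i)‖ ^ 2 := by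
  unfold hsNorm
  rw [Real.sq_sqrt (opTrace_sq_nonneg A), opTrace_sq]

lemma hsNorm_nonneg (A : H →L[ℂ] H) : 0 ≤ hsNorm A := Real.sqrt_nonneg _

lemma parseval_hasSum (x : H) :
    HasSum (fun i => ‖⟪traceBasis H i, x⟫_ℂ‖ ^ 2) (‖x‖ ^ 2) := by
  have h := (traceBasis H).hasSum_inner_mul_inner x x
  have h2 := Complex.hasSum_re h
  convert h2 using 1
  · ext i
    rw [← inner_conj_symm x, ← Complex.normSq_eq_conj_mul_self, Complex.ofReal_re,
      Complex.normSq_eq_norm_sq]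
  · exact (inner_self_eq_norm_sq (𝕜 := ℂ) x).symm

lemma parseval_enn (x : H) :
    ∑' i, ENNReal.ofReal (‖⟪traceBasis H i, x⟫_ℂ‖ ^ 2) = ENNReal.ofReal (‖x‖ ^ 2) := by
  rw [← (parseval_hasSum x).tsum_eq, ENNReal.ofReal_tsum_of_nonneg (fun i => by positivity)
    (parseval_hasSum x).summable]

lemma enn_star (A : H →L[ℂ] H) :
    ∑' i, ENNReal.ofReal (‖(star A) (traceBasis H i)‖ ^ 2)
      = ∑' i, ENNReal.ofReal (‖A (traceBasis H i)‖ ^ 2) := by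
  rw [tsum_congr fun i => (parseval_enn ((star A) (traceBasis H i))).symm,
    tsum_congr fun i => (parseval_enn (A (traceBasis H i))).symm]
  rw [ENNReal.tsum_comm]
  refine tsum_congr fun i => tsum_congr fun j => ?_
  rw [ContinuousLinearMap.star_eq_adjoint, ContinuousLinearMap.adjoint_inner_right,
    norm_inner_symm]

lemma IsHilbertSchmidt.star' {A : H →L[ℂ] H} (hA : IsHilbertSchmidt A) :
    IsHilbertSchmidt (star A) := by
  rw [hs_iff] at *
  have h1 := hA.tsum_ofReal_ne_top
  rw [← enn_star] at h1
  have := ENNReal.summable_toReal h1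
  refine this.congr fun i => ?_
  rw [ENNReal.toReal_ofReal (by positivity)]

lemma hsNorm_star {A : H →L[ℂ] H} (hA : IsHilbertSchmidt A) : hsNorm (star A) = hsNorm A := by
  have h := enn_star A
  rw [← ENNReal.ofReal_tsum_of_nonneg (fun i => by positivity) ((hs_iff _).1 hA.star'),
    ← ENNReal.ofReal_tsum_of_nonneg (fun i => by positivity) ((hs_iff _).1 hA),
    ← hsNorm_sq, ← hsNorm_sq] at h
  rw [ENNReal.ofReal_eq_ofReal_iff (by positivity) (by positivity)] at h
  exact (sq_eq_sq₀ (hsNorm_nonneg _) (hsNorm_nonneg _)).1 h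

lemma IsHilbertSchmidt.mul_left {A : H →L[ℂ] H} (hA : IsHilbertSchmidt A) (L : H →L[ℂ] H) :
    IsHilbertSchmidt (L * A) ∧ hsNorm (L * A) ≤ ‖L‖ * hsNorm A := by
  have hb : ∀ i, ‖(L * A) (traceBasis H i)‖ ^ 2 ≤ ‖L‖ ^ 2 * ‖A (traceBasis H i)‖ ^ 2 := by
    intro i
    rw [← mul_pow]
    exact pow_le_pow_left₀ (norm_nonneg _) (L.le_opNorm _) 2
  have hs := ((hs_iff A).1 hA).mul_left (‖L‖ ^ 2)
  have h1 : Summable fun i => ‖(L * A) (traceBasis H i)‖ ^ 2 :=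
    Summable.of_nonneg_of_le (fun i => by positivity) hb hs
  refine ⟨(hs_iff _).2 h1, ?_⟩
  refine (sq_le_sq₀ (by first | exact hsNorm_nonneg _ | exact norm_nonneg _) (mul_nonneg (norm_nonneg _) (hsNorm_nonneg _))).1 ?_
  rw [mul_pow, hsNorm_sq, hsNorm_sq, ← tsum_mul_left]
  exact h1.tsum_le_tsum hb hs

lemma IsHilbertSchmidt.mul_right {A : H →L[ℂ] H} (hA : IsHilbertSchmidt A) (L : H →L[ℂ] H) :
    IsHilbertSchmidt (A * L) ∧ hsNorm (A * L) ≤ hsNorm A * ‖L‖ := by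
  have h := hA.star'.mul_left (star L)
  rw [← star_mul] at h
  have h1 : IsHilbertSchmidt (A * L) := by simpa using h.1.star'
  refine ⟨h1, ?_⟩
  have h2 := h.2
  rw [hsNorm_star h1, hsNorm_star hA, norm_star] at h2
  linarith

lemma IsHilbertSchmidt.add' {A B : H →L[ℂ] H} (hA : IsHilbertSchmidt A)
    (hB : IsHilbertSchmidt B) : IsHilbertSchmidt (A + B) := by
  rw [hs_iff] at *
  refine Summable.of_nonneg_of_le (fun i => by positivity) (fun i => ?_)
    ((hA.add hB).mul_left 2)
  have h1 := norm_add_le (A (traceBasis H i)) (B (traceBasis H i))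
  have h2 : ‖(A + B) (traceBasis H i)‖ ^ 2 ≤
      (‖A (traceBasis H i)‖ + ‖B (traceBasis H i)‖) ^ 2 :=
    pow_le_pow_left₀ (norm_nonneg _) h1 2
  nlinarith [sq_nonneg (‖A (traceBasis H i)‖ - ‖B (traceBasis H i)‖)]

lemma IsHilbertSchmidt.neg' {A : H →L[ℂ] H} (hA : IsHilbertSchmidt A) :
    IsHilbertSchmidt (-A) := by
  rw [hs_iff] at *
  simpa using hA

lemma IsHilbertSchmidt.sub' {A B : H →L[ℂ] H} (hA : IsHilbertSchmidt A)
    (hB : IsHilbertSchmidt B) : IsHilbertSchmidt (A - B) := by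
  rw [sub_eq_add_neg]; exact hA.add' hB.neg'

lemma opDiag_mul_polar (A B : H →L[ℂ] H) (i) :
    opDiag (A * B) i = 1 / 4 * (‖(star A + B) (traceBasis H i)‖ ^ 2
      - ‖(star A - B) (traceBasis H i)‖ ^ 2) := by
  have h := opDiag_star_mul (star A) B i
  rw [star_star] at h
  rw [h]
  have h1 := norm_add_sq (𝕜 := ℂ) ((star A) (traceBasis H i)) (B (traceBasis H i))
  have h2 := norm_sub_sq (𝕜 := ℂ) ((star A) (traceBasis H i)) (B (traceBasis H i))
  simp only [ContinuousLinearMap.add_apply, ContinuousLinearMap.sub_apply]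
  rw [h1, h2]
  simp only [RCLike.re_eq_complex_re]
  ring

lemma summable_mul {A B : H →L[ℂ] H} (hA : IsHilbertSchmidt A) (hB : IsHilbertSchmidt B) :
    Summable (opDiag (A * B)) := by
  have h1 := (hs_iff _).1 (hA.star'.add' hB)
  have h2 := (hs_iff _).1 (hA.star'.sub' hB)
  exact ((h1.sub h2).mul_left (1 / 4)).congr fun i => (opDiag_mul_polar A B i).symm

lemma opTrace_mul_polar {A B : H →L[ℂ] H} (hA : IsHilbertSchmidt A) (hB : IsHilbertSchmidt B) :
    opTrace (A * B) = 1 / 4 * (hsNorm (star A + B) ^ 2 - hsNorm (star A - B) ^ 2) := by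
  have h1 := (hs_iff _).1 (hA.star'.add' hB)
  have h2 := (hs_iff _).1 (hA.star'.sub' hB)
  unfold opTrace
  rw [hsNorm_sq, hsNorm_sq, tsum_congr (opDiag_mul_polar A B), tsum_mul_left, h1.tsum_sub h2]

lemma hsNorm_neg (A : H →L[ℂ] H) : hsNorm (-A) = hsNorm A := by
  unfold hsNorm; simp

lemma opTrace_comm {A B : H →L[ℂ] H} (hA : IsHilbertSchmidt A) (hB : IsHilbertSchmidt B) :
    opTrace (A * B) = opTrace (B * A) := by
  rw [opTrace_mul_polar hA hB, opTrace_mul_polar hB hA, ← hsNorm_star (hA.star'.add' hB),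
    ← hsNorm_star (hA.star'.sub' hB), star_add, star_sub, star_star, add_comm A,
    ← hsNorm_neg (A - star B), neg_sub]

lemma opTrace_mul_le {A B : H →L[ℂ] H} (hA : IsHilbertSchmidt A) (hB : IsHilbertSchmidt B) :
    |opTrace (A * B)| ≤ hsNorm A ^ 2 + hsNorm B ^ 2 := by
  have hs := summable_mul hA hB
  have h1 := (hs_iff _).1 hA.star'
  have h2 := (hs_iff _).1 hB
  rw [← hsNorm_star hA, hsNorm_sq, hsNorm_sq, ← h1.tsum_add h2]
  have key : ∀ i, |opDiag (A * B) i| ≤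
      ‖(star A) (traceBasis H i)‖ ^ 2 + ‖B (traceBasis H i)‖ ^ 2 := by
    intro i
    have h := opDiag_star_mul (star A) B i
    rw [star_star] at h
    rw [h]
    refine (Complex.abs_re_le_norm _).trans ((norm_inner_le_norm _ _).trans ?_)
    nlinarith [sq_nonneg (‖(star A) (traceBasis H i)‖ - ‖B (traceBasis H i)‖),
      sq_nonneg (‖(star A) (traceBasis H i)‖), sq_nonneg (‖B (traceBasis H i)‖)]
  unfold opTrace
  have h3 : |∑' i, opDiag (A * B) i| ≤ ∑' i, |opDiag (A * B) i| := by
    simpa using norm_tsum_le_tsum_norm (f := opDiag (A * B)) (by simpa using hs.abs)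
  exact h3.trans (hs.abs.tsum_le_tsum key (h1.add h2))

lemma opNorm_le_hsNorm {A : H →L[ℂ] H} (hA : IsHilbertSchmidt A) : ‖A‖ ≤ hsNorm A := by
  refine A.opNorm_le_bound (hsNorm_nonneg _) fun x => ?_
  refine (sq_le_sq₀ (by first | exact hsNorm_nonneg _ | exact norm_nonneg _) (mul_nonneg (hsNorm_nonneg _) (norm_nonneg _))).1 ?_
  have h1 := (hs_iff _).1 hA.star'
  have hp := parseval_hasSum (A x)
  rw [mul_pow, ← hsNorm_star hA, hsNorm_sq, ← tsum_mul_right, ← hp.tsum_eq]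
  refine hp.summable.tsum_le_tsum (fun i => ?_) (h1.mul_right _)
  rw [← mul_pow, ← ContinuousLinearMap.adjoint_inner_left]
  exact pow_le_pow_left₀ (norm_nonneg _) (norm_inner_le_norm _ _) 2

lemma opTrace_add {A B : H →L[ℂ] H} (hA : Summable (opDiag A)) (hB : Summable (opDiag B)) :
    opTrace (A + B) = opTrace A + opTrace B := by
  unfold opTrace; rw [opDiag_add]; exact hA.tsum_add hB

lemma opTrace_sub {A B : H →L[ℂ] H} (hA : Summable (opDiag A)) (hB : Summable (opDiag B)) :
    opTrace (A - B) = opTrace A - opTrace B := by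
  unfold opTrace; rw [opDiag_sub]; exact hA.tsum_sub hB

lemma summable_sub' {A B : H →L[ℂ] H} (hA : Summable (opDiag A)) (hB : Summable (opDiag B)) :
    Summable (opDiag (A - B)) := by
  rw [opDiag_sub]; exact hA.sub hB

lemma summable_add' {A B : H →L[ℂ] H} (hA : Summable (opDiag A)) (hB : Summable (opDiag B)) :
    Summable (opDiag (A + B)) := by
  rw [opDiag_add]; exact hA.add hB

lemma exists_sqrt {P : H →L[ℂ] H} (hP : IsPosTraceClass P) :
    ∃ Q : H →L[ℂ] H, IsHilbertSchmidt Q ∧ Q * Q = P := by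
  refine ⟨CFC.sqrt P, ?_, CFC.sqrt_mul_sqrt_self P hP.1⟩
  have hs : star (CFC.sqrt P) = CFC.sqrt P :=
    (IsSelfAdjoint.of_nonneg (CFC.sqrt_nonneg P)).star_eq
  unfold IsHilbertSchmidt
  rw [hs, CFC.sqrt_mul_sqrt_self P hP.1]
  exact hP.2

lemma isUnit_one_add {z : H →L[ℂ] H} (hz : 0 ≤ z) : IsUnit (1 + z) := by
  exact CStarAlgebra.isUnit_of_le (1 : H →L[ℂ] H) (le_add_of_nonneg_right hz)
    (by simp)

lemma alg_identity {A : Type*} [Ring A] (M P z h R S : A) (h1 : (1 + z) * R = 1)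
    (h2 : R * (1 + z) = 1) (h3 : (1 + z + h) * S = 1) :
    M * (z + h) ^ 2 * S + P * S - M * z ^ 2 * R - P * R - (M - R * M * R - R * P * R) * h
      = ((M + P) * R * h) * (z * R) - (z * R) * ((M + P) * R * h)
        + ((M + P) * R * h) * (R * h * S) := by
  have a1 : z * R = 1 - R := by rw [← h1]; noncomm_ring
  have a2 : (z + h) * S = 1 - S := by rw [← h3]; noncomm_ring
  have a3 : z ^ 2 * R = z - 1 + R := by rw [pow_two, mul_assoc, a1, mul_sub, a1]; noncomm_ring
  have a4 : (z + h) ^ 2 * S = z + h - 1 + S := by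
    rw [pow_two, mul_assoc, a2, mul_sub, a2]; noncomm_ring
  have a5 : R * h * S = R - S := by
    have : R * h * S = R * ((1 + z + h) * S) - (R * (1 + z)) * S := by noncomm_ring
    rw [this, h2, h3]; simp
  rw [mul_assoc M, mul_assoc M (z ^ 2), a3, a4, a1, a5]
  have a6 : (M + P) * R * h * (R - S) = (M + P) * R * h * R - (M + P) * (R - S) := by
    rw [mul_sub, ← a5]; noncomm_ring
  rw [a6]; noncomm_ring

end Helpers

/-- Fréchet differentiability (with respect to the Hilbert–Schmidt norm) of
`F(z) = Tr[M z²(1+z)⁻¹] + Tr[P(1+z)⁻¹]` at every positive Hilbert–Schmidt `z`, with gradient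
`M − (1+z)⁻¹M(1+z)⁻¹ − (1+z)⁻¹P(1+z)⁻¹`. -/
theorem trace_energy_frechet_differentiable {H : Type*} [NormedAddCommGroup H]
    [InnerProductSpace ℂ H] [CompleteSpace H] (M P z : H →L[ℂ] H) (hM : 0 ≤ M)
    (hP : IsPosTraceClass P) (hz : 0 ≤ z) (hzHS : IsHilbertSchmidt z) :
    ∀ ε : ℝ, 0 < ε → ∃ δ : ℝ, 0 < δ ∧
      ∀ h : H →L[ℂ] H, IsSelfAdjoint h → IsHilbertSchmidt h → hsNorm h < δ →
        hsNorm h < 1 / 2 →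
        |opTrace (M * (z + h) ^ 2 * Ring.inverse (1 + z + h))
            + opTrace (P * Ring.inverse (1 + z + h))
            - opTrace (M * z ^ 2 * Ring.inverse (1 + z))
            - opTrace (P * Ring.inverse (1 + z))
            - opTrace ((M - Ring.inverse (1 + z) * M * Ring.inverse (1 + z)
                - Ring.inverse (1 + z) * P * Ring.inverse (1 + z)) * h)|
          ≤ ε * hsNorm h := by
  intro ε hε
  have hu : IsUnit (1 + z) := isUnit_one_add hz
  set R := Ring.inverse (1 + z) with hR
  obtain ⟨Q, hQ, rfl⟩ := exists_sqrt hP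
  have hPHS : IsHilbertSchmidt (Q * Q) := (hQ.mul_left Q).1
  -- local control of the inverse
  have hev : ∀ᶠ x in nhds (1 + z), IsUnit x ∧ ‖Ring.inverse x‖ < ‖R‖ + 1 := by
    obtain ⟨u, hu'⟩ := hu
    have hc := (NormedRing.inverse_continuousAt u).norm
    have ho := Units.isOpen.mem_nhds (show (u : H →L[ℂ] H) ∈ {x | IsUnit x} from u.isUnit)
    rw [hu'] at hc ho
    have := hc.eventually_lt_const (show ‖Ring.inverse (1 + z)‖ < ‖R‖ + 1 by
      rw [← hR]; linarith)
    filter_upwards [ho, this] with x hx hx'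
    exact ⟨hx, hx'⟩
  obtain ⟨δ₁, hδ₁, hball⟩ := Metric.eventually_nhds_iff.1 hev
  set N := M + Q * Q with hN
  set C := (‖N‖ * ‖R‖) ^ 2 + (‖R‖ * (‖R‖ + 1)) ^ 2 with hC
  have hC0 : 0 ≤ C := by positivity
  refine ⟨min δ₁ (ε / (C + 1)), lt_min hδ₁ (by positivity), ?_⟩
  intro h _ hh hd _
  have hd1 : hsNorm h < δ₁ := hd.trans_le (min_le_left _ _)
  have hd2 : hsNorm h < ε / (C + 1) := hd.trans_le (min_le_right _ _)
  obtain ⟨hu2, hS⟩ := @hball (1 + z + h) (by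
    rw [dist_eq_norm, add_sub_cancel_left]; exact (opNorm_le_hsNorm hh).trans_lt hd1)
  set S := Ring.inverse (1 + z + h) with hSdef
  have hB := (hh.mul_left (N * R))
  have hD1 := hh.mul_left R
  have hD := hD1.1.mul_right S
  have hzR := (hzHS.mul_right R).1
  have hid := alg_identity M (Q * Q) z h R S (Ring.mul_inverse_cancel _ hu)
    (Ring.inverse_mul_cancel _ hu) (Ring.mul_inverse_cancel _ hu2)
  -- summability
  have s1 : Summable (opDiag (M * (z + h) ^ 2 * S)) := by
    have := summable_mul ((hzHS.add' hh).mul_left M).1 ((hzHS.add' hh).mul_right S).1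
    rwa [show M * (z + h) * ((z + h) * S) = M * (z + h) ^ 2 * S by
      rw [pow_two]; simp only [mul_assoc]] at this
  have s3 : Summable (opDiag (M * z ^ 2 * R)) := by
    have := summable_mul (hzHS.mul_left M).1 (hzHS.mul_right R).1
    rwa [show M * z * (z * R) = M * z ^ 2 * R by
      rw [pow_two]; simp only [mul_assoc]] at this
  have s2 : Summable (opDiag (Q * Q * S)) := by
    rw [mul_assoc]; exact summable_mul hQ (hQ.mul_right S).1
  have s4 : Summable (opDiag (Q * Q * R)) := by
    rw [mul_assoc]; exact summable_mul hQ (hQ.mul_right R).1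
  have hG : IsHilbertSchmidt (M - R * M * R - R * (Q * Q) * R) := by
    refine IsHilbertSchmidt.sub' ?_ ((hPHS.mul_left R).1.mul_right R).1
    have r1 : R = 1 - z * R := by
      have := Ring.mul_inverse_cancel _ hu
      rw [← hR, add_mul, one_mul] at this
      rw [← this]; abel
    have r2 : R = 1 - R * z := by
      have := Ring.inverse_mul_cancel _ hu
      rw [← hR, mul_add, mul_one] at this
      rw [← this]; abel
    have e1 : M - R * M * R = R * z * M + R * M * (z * R) := by
      have e2 : R * M * R = R * M - R * M * (z * R) := by
        conv_lhs => rw [r1]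
        rw [mul_sub, mul_one, ← r1]
      have e3 : R * M = M - R * z * M := by
        conv_lhs => rw [r2]
        rw [sub_mul, one_mul]
      rw [e2]
      nth_rewrite 1 [e3]
      abel
    rw [e1]
    exact ((hzHS.mul_left R).1.mul_right M).1.add' (hzR.mul_left _).1
  have s5 := summable_mul hG hh
  have t1 := summable_mul hB.1 hzR
  have t2 := summable_mul hzR hB.1
  have t3 := summable_mul hB.1 hD.1
  rw [← opTrace_add s1 s2, ← opTrace_sub (summable_add' s1 s2) s3,
    ← opTrace_sub (summable_sub' (summable_add' s1 s2) s3) s4,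
    ← opTrace_sub (summable_sub' (summable_sub' (summable_add' s1 s2) s3) s4) s5, hid,
    opTrace_add (summable_sub' t1 t2) t3, opTrace_sub t1 t2, opTrace_comm hB.1 hzR, sub_self,
    zero_add]
  refine (opTrace_mul_le hB.1 hD.1).trans ?_
  have h0 := hsNorm_nonneg h
  have b1 : hsNorm (N * R * h) ≤ (‖N‖ * ‖R‖) * hsNorm h :=
    hB.2.trans (mul_le_mul_of_nonneg_right (norm_mul_le _ _) h0)
  have b2 : hsNorm (R * h * S) ≤ (‖R‖ * (‖R‖ + 1)) * hsNorm h := by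
    refine hD.2.trans ?_
    calc hsNorm (R * h) * ‖S‖ ≤ (‖R‖ * hsNorm h) * (‖R‖ + 1) :=
          mul_le_mul hD1.2 hS.le (norm_nonneg _) (by positivity)
      _ = _ := by ring
  have c1 := pow_le_pow_left₀ (hsNorm_nonneg _) b1 2
  have c2 := pow_le_pow_left₀ (hsNorm_nonneg _) b2 2
  have c3 : hsNorm h * (C + 1) ≤ ε := ((lt_div_iff₀ (by positivity)).1 hd2).le
  calc hsNorm (N * R * h) ^ 2 + hsNorm (R * h * S) ^ 2 ≤ C * hsNorm h * hsNorm h := by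
        rw [hC]; nlinarith
    _ ≤ ε * hsNorm h := by
        refine mul_le_mul_of_nonneg_right ?_ h0
        nlinarith
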